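/- arXiv:1506.08927 — 2 statements merged into one kernel-verified Lean document; each statement's English description precedes it below -/
import Mathlib

section
/- Assume 0 ≤ i < k < ℓ < j ≤ n. Then Ext^1(X_{i,j}, X_{k,ℓ}) ≠ 0 if and only if ε_k = + and ε_ℓ = −; and Ext^1(X_{k,ℓ}, X_{i,j}) ≠ 0 if and only if ε_k = − and ε_ℓ = +. -/
namespace ESPaper

/-- Source of arrow `a m` (between vertices `m` and `m+1`): `m` if `ε m = +` (true). -/
def asrc (ε : ℕ → Bool) (m : ℕ) : ℕ := if ε m then m else m + 1

/-- Target of arrow `a m`. -/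
def atgt (ε : ℕ → Bool) (m : ℕ) : ℕ := if ε m then m + 1 else m

/-- A representation of the type `A_n` quiver `Q_ε`: finite dimensional vector spaces at the
vertices `1, …, n` (the spaces at the remaining indices are required to be trivial, so that
the maps attached to indices outside `1, …, n-1` carry no information) together with a
linear map along each arrow `a m : asrc ε m → atgt ε m`, `1 ≤ m ≤ n-1`. -/
structure Rep (K : Type) [Field K] (n : ℕ) (ε : ℕ → Bool) : Type 1 where
  V : ℕ → Type
  [instAdd : ∀ m, AddCommGroup (V m)]
  [instMod : ∀ m, Module K (V m)]
  [instFin : ∀ m, FiniteDimensional K (V m)]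
  triv : ∀ m, m = 0 ∨ n < m → Subsingleton (V m)
  φ : ∀ m, V (asrc ε m) →ₗ[K] V (atgt ε m)

attribute [instance] Rep.instAdd Rep.instMod Rep.instFin

/-- A morphism of representations of `Q_ε`. -/
structure RepHom {K : Type} [Field K] {n : ℕ} {ε : ℕ → Bool} (A B : Rep K n ε) where
  app : ∀ m, A.V m →ₗ[K] B.V m
  comm : ∀ m, (app (atgt ε m)).comp (A.φ m) = (B.φ m).comp (app (asrc ε m))

/-- Vertex space of the indecomposable `X_{i,j}` (for `0 ≤ i < j ≤ n`): `K` at the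
vertices `i+1, …, j` and `0` elsewhere. -/
def XV (K : Type) [Field K] (n i j m : ℕ) : Submodule K K :=
  if i + 1 ≤ m ∧ m ≤ j ∧ m ≤ n then ⊤ else ⊥

/-- Arrow map of the indecomposable `X_{i,j}`: the identity whenever both endpoints of the
arrow lie in the support, and zero otherwise. -/
def Xφ (K : Type) [Field K] (n : ℕ) (ε : ℕ → Bool) (i j m : ℕ) :
    XV K n i j (asrc ε m) →ₗ[K] XV K n i j (atgt ε m) :=
  if h : i + 1 ≤ atgt ε m ∧ atgt ε m ≤ j ∧ atgt ε m ≤ n then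
    LinearMap.codRestrict _ (XV K n i j (asrc ε m)).subtype
      (fun x => by simp [XV, h.1, h.2.1, h.2.2])
  else 0

/-- The indecomposable representation `X_{i,j}` of `Q_ε`. -/
def Xrep (K : Type) [Field K] (n : ℕ) (ε : ℕ → Bool) (i j : ℕ) : Rep K n ε where
  V m := XV K n i j m
  instAdd _ := inferInstance
  instMod _ := inferInstance
  instFin _ := inferInstance
  triv m hm := by
    have hneg : ¬ (i + 1 ≤ m ∧ m ≤ j ∧ m ≤ n) := by omega
    have hbot : XV K n i j m = ⊥ := by unfold XV; rw [if_neg hneg]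
    show Subsingleton (XV K n i j m)
    rw [hbot]
    infer_instance
  φ m := Xφ K n ε i j m

variable {K : Type} [Field K]

/-- `Hom(A, B) = 0`. -/
def homZero {n : ℕ} {ε : ℕ → Bool} (A B : Rep K n ε) : Prop :=
  ∀ θ : RepHom A B, ∀ m, θ.app m = 0

/-- `Hom(A, B) ≠ 0`. -/
def homNonzero {n : ℕ} {ε : ℕ → Bool} (A B : Rep K n ε) : Prop :=
  ∃ θ : RepHom A B, ∃ m, θ.app m ≠ 0

/-- `0 → B → E → A → 0` is a short exact sequence. -/
def IsSES {n : ℕ} {ε : ℕ → Bool} {B E A : Rep K n ε}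
    (f : RepHom B E) (g : RepHom E A) : Prop :=
  (∀ m, Function.Injective (f.app m)) ∧ (∀ m, Function.Surjective (g.app m)) ∧
    (∀ m, LinearMap.range (f.app m) = LinearMap.ker (g.app m))

/-- The short exact sequence `0 → B → E → A → 0` splits. -/
def Splits {n : ℕ} {ε : ℕ → Bool} {E A : Rep K n ε} (g : RepHom E A) : Prop :=
  ∃ s : RepHom A E, ∀ m, (g.app m).comp (s.app m) = LinearMap.id

/-- `Ext¹(A, B) ≠ 0`: there is a nonsplit short exact sequence `0 → B → E → A → 0`. -/
def extNonzero {n : ℕ} {ε : ℕ → Bool} (A B : Rep K n ε) : Prop :=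
  ∃ (E : Rep K n ε) (f : RepHom B E) (g : RepHom E A), IsSES f g ∧ ¬ Splits g

/-- `Ext¹(A, B) = 0`. -/
def extZero {n : ℕ} {ε : ℕ → Bool} (A B : Rep K n ε) : Prop := ¬ extNonzero A B

/-- `(U, V)` is an exceptional pair: `Hom(V,U) = 0` and `Ext¹(V,U) = 0`. -/
def ExcPair {n : ℕ} {ε : ℕ → Bool} (U V : Rep K n ε) : Prop := homZero V U ∧ extZero V U


theorem extNonzero_iff_cocycle {K : Type} [Field K] {n : ℕ} {ε : ℕ → Bool} (A B : Rep K n ε) :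
    extNonzero A B ↔ ∃ c : ∀ m, A.V (asrc ε m) →ₗ[K] B.V (atgt ε m),
      ∀ h : ∀ m, A.V m →ₗ[K] B.V m,
        ∃ m, c m ≠ (h (atgt ε m)).comp (A.φ m) - (B.φ m).comp (h (asrc ε m)) := by
  constructor
  · rintro ⟨E, f, g, ⟨hf, hg, hfg⟩, hs⟩
    have h1 : ∀ m, ∃ σ : A.V m →ₗ[K] E.V m, (g.app m).comp σ = LinearMap.id := fun m =>
      (g.app m).exists_rightInverse_of_surjective (LinearMap.range_eq_top.2 (hg m))
    have h2 : ∀ m, ∃ r : E.V m →ₗ[K] B.V m, r.comp (f.app m) = LinearMap.id := fun m =>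
      (f.app m).exists_leftInverse_of_injective (LinearMap.ker_eq_bot.2 (hf m))
    choose σ hσ using h1
    choose r hr using h2
    have hσ' : ∀ m x, g.app m (σ m x) = x := fun m x => LinearMap.congr_fun (hσ m) x
    have hr' : ∀ m x, r m (f.app m x) = x := fun m x => LinearMap.congr_fun (hr m) x
    have fc : ∀ m x, f.app m x ∈ LinearMap.ker (g.app m) := fun m x => by
      rw [← hfg]; exact ⟨x, rfl⟩
    have gE : ∀ m x, g.app _ (E.φ m x) = A.φ m (g.app _ x) := fun m x =>
      LinearMap.congr_fun (g.comm m) x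
    have fE : ∀ m x, f.app _ (B.φ m x) = E.φ m (f.app _ x) := fun m x =>
      LinearMap.congr_fun (f.comm m) x
    refine ⟨fun m => (r _).comp ((E.φ m).comp (σ _) - (σ _).comp (A.φ m)), fun h => ?_⟩
    by_contra! hc
    apply hs
    refine ⟨⟨fun m => σ m + (f.app m).comp (h m), fun m => ?_⟩, fun m => ?_⟩
    · ext x
      have h3 := LinearMap.congr_fun (hc m) x
      have h4 : E.φ m (σ _ x) - σ _ (A.φ m x) ∈ LinearMap.range (f.app (atgt ε m)) := by
        rw [hfg, LinearMap.mem_ker, map_sub, gE, hσ', hσ', sub_self]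
      obtain ⟨b, hb⟩ := h4
      simp only [LinearMap.comp_apply, LinearMap.sub_apply] at h3
      rw [← hb, hr'] at h3
      rw [h3, map_sub, fE] at hb
      simp only [LinearMap.comp_apply, LinearMap.add_apply, map_add]
      rw [sub_eq_sub_iff_add_eq_add] at hb
      rw [← hb.symm.trans (add_comm _ _)]
    · ext x
      have := fc m (h m x)
      rw [LinearMap.mem_ker] at this
      simp [hσ', this]
  · rintro ⟨c, hc⟩
    let E : Rep K n ε :=
      { V := fun m => A.V m × B.V m
        triv := fun m hm => by
          have := A.triv m hm
          have := B.triv m hm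
          infer_instance
        φ := fun m => ((A.φ m).comp (LinearMap.fst K _ _)).prod
          ((B.φ m).comp (LinearMap.snd K _ _) + (c m).comp (LinearMap.fst K _ _)) }
    let f : RepHom B E :=
      { app := fun m => LinearMap.inr K (A.V m) (B.V m)
        comm := fun m => by
          ext x <;> simp [E] }
    let g : RepHom E A :=
      { app := fun m => LinearMap.fst K (A.V m) (B.V m)
        comm := fun m => by
          apply LinearMap.ext
          rintro ⟨x, y⟩
          simp [E] }
    refine ⟨E, f, g, ⟨fun m => LinearMap.inr_injective, fun m => LinearMap.fst_surjective,
      fun m => LinearMap.range_inr K (A.V m) (B.V m)⟩, ?_⟩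
    rintro ⟨s, hs⟩
    obtain ⟨m, hm⟩ := hc (fun m => (LinearMap.snd K (A.V m) (B.V m)).comp (s.app m))
    apply hm
    ext x
    have h1 := congrArg Prod.snd (LinearMap.congr_fun (s.comm m) x)
    have h2 : (s.app _ x).1 = x := LinearMap.congr_fun (hs (asrc ε m)) x
    simp only [LinearMap.comp_apply] at h1
    change _ = B.φ m (s.app _ x).2 + c m (s.app _ x).1 at h1
    rw [h2] at h1
    simp only [LinearMap.comp_apply, LinearMap.sub_apply, LinearMap.snd_apply]
    exact eq_sub_of_add_eq' h1.symm

/-- support -/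
def Sup (n i j m : ℕ) : Prop := i + 1 ≤ m ∧ m ≤ j ∧ m ≤ n

theorem mem_XV {K : Type} [Field K] {n i j m : ℕ} (h : Sup n i j m) (x : K) :
    x ∈ XV K n i j m := by
  unfold Sup at h
  simp [XV, h]

theorem eq_zero_XV {K : Type} [Field K] {n i j m : ℕ} (h : ¬ Sup n i j m)
    (x : XV K n i j m) : x = 0 := by
  have hb : XV K n i j m = ⊥ := by
    unfold Sup at h
    unfold XV
    rw [if_neg h]
  have hx : (x : K) ∈ (⊥ : Submodule K K) := by
    rw [← hb]; exact x.2
  exact Subtype.ext (by simpa using hx)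

open Classical in
/-- scalar map -/
noncomputable def mkS (K : Type) [Field K] (n i j k l p q : ℕ) (x : K) :
    XV K n i j p →ₗ[K] XV K n k l q :=
  if h : Sup n k l q then
    LinearMap.codRestrict _ (x • (XV K n i j p).subtype) (fun _ => mem_XV h _)
  else 0

theorem mkS_apply {K : Type} [Field K] {n i j k l p q : ℕ} (h : Sup n k l q) (x : K)
    (y : XV K n i j p) : (mkS K n i j k l p q x y : K) = x * y := by
  simp [mkS, h]

open Classical in
theorem Xφ_apply {K : Type} [Field K] {n : ℕ} {ε : ℕ → Bool} {i j m : ℕ}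
    (x : XV K n i j (asrc ε m)) :
    (Xφ K n ε i j m x : K) = if Sup n i j (atgt ε m) then (x : K) else 0 := by
  by_cases h : Sup n i j (atgt ε m)
  · rw [if_pos h]
    have : Xφ K n ε i j m = LinearMap.codRestrict _ (XV K n i j (asrc ε m)).subtype
      (fun x => mem_XV h _) := dif_pos h
    rw [this]
    rfl
  · rw [if_neg h]
    have : Xφ K n ε i j m = 0 := dif_neg h
    rw [this]
    rfl

open Classical in
/-- scalar of a map -/
noncomputable def sc {K : Type} [Field K] {n i j k l p q : ℕ}
    (f : XV K n i j p →ₗ[K] XV K n k l q) : K :=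
  if h : Sup n i j p then (f ⟨1, mem_XV h 1⟩ : K) else 0

theorem sc_spec {K : Type} [Field K] {n i j k l p q : ℕ}
    (f : XV K n i j p →ₗ[K] XV K n k l q) (x : XV K n i j p) : (f x : K) = sc f * x := by
  by_cases h : Sup n i j p
  · have : x = (x : K) • (⟨1, mem_XV h 1⟩ : XV K n i j p) := Subtype.ext (by simp)
    have h2 : f x = (x : K) • f ⟨1, mem_XV h 1⟩ := by
      rw [← map_smul, ← this]
    rw [h2]
    simp [sc, h, mul_comm]
  · rw [eq_zero_XV h x]; simp

open Classical in
theorem ext_scalar (K : Type) [Field K] (n : ℕ) (ε : ℕ → Bool) (i j k l : ℕ) :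
    extNonzero (Xrep K n ε i j) (Xrep K n ε k l) ↔ ∃ c : ℕ → K, ∀ h : ℕ → K,
      ∃ m, Sup n i j (asrc ε m) ∧ Sup n k l (atgt ε m) ∧
        c m ≠ (if Sup n i j (atgt ε m) then h (atgt ε m) else 0) -
          (if Sup n k l (asrc ε m) then h (asrc ε m) else 0) := by
  rw [extNonzero_iff_cocycle]
  constructor
  · rintro ⟨c, hc⟩
    refine ⟨fun m => sc (c m), fun h => ?_⟩
    obtain ⟨m, hm⟩ := hc (fun m => mkS K n i j k l m m (h m))
    by_contra! hcon
    apply hm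
    apply LinearMap.ext
    intro (x : XV K n i j (asrc ε m))
    by_cases hs : Sup n i j (asrc ε m)
    swap
    · rw [eq_zero_XV hs x]; exact (map_zero _).trans (map_zero _).symm
    by_cases ht : Sup n k l (atgt ε m)
    swap
    · exact (eq_zero_XV ht _).trans (eq_zero_XV ht _).symm
    apply Subtype.ext
    refine (sc_spec (c m) x).trans ?_
    rw [hcon m hs ht]
    change _ = (mkS K n i j k l _ _ (h _) (Xφ K n ε i j m x) : K) -
      (Xφ K n ε k l m (mkS K n i j k l _ _ (h _) x) : K)
    rw [mkS_apply ht, Xφ_apply, Xφ_apply, if_pos ht]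
    by_cases hs' : Sup n k l (asrc ε m)
    · rw [mkS_apply hs', if_pos hs']; split_ifs <;> ring
    · rw [eq_zero_XV hs' (mkS K n i j k l _ _ (h _) x), if_neg hs']
      split_ifs <;> simp
  · rintro ⟨c, hc⟩
    refine ⟨fun m => mkS K n i j k l _ _ (c m), fun h' => ?_⟩
    suffices H : ∀ h : (∀ m, XV K n i j m →ₗ[K] XV K n k l m), ∃ m,
        mkS K n i j k l (asrc ε m) (atgt ε m) (c m) ≠
          (h (atgt ε m)).comp (Xφ K n ε i j m) - (Xφ K n ε k l m).comp (h (asrc ε m)) from H h'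
    intro h
    obtain ⟨m, hs, ht, hm⟩ := hc (fun m => sc (h m))
    refine ⟨m, fun heq => hm ?_⟩
    have h1 := LinearMap.congr_fun heq (⟨1, mem_XV hs 1⟩ : XV K n i j (asrc ε m))
    have h2 : (mkS K n i j k l _ _ (c m) (⟨1, mem_XV hs 1⟩ : XV K n i j (asrc ε m)) : K) =
      (h (atgt ε m) (Xφ K n ε i j m ⟨1, mem_XV hs 1⟩) : K) -
      (Xφ K n ε k l m (h (asrc ε m) ⟨1, mem_XV hs 1⟩) : K) := congrArg Subtype.val h1
    rw [mkS_apply ht, Xφ_apply, if_pos ht, sc_spec (h (atgt ε m)), Xφ_apply] at h2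
    by_cases hh : Sup n k l (asrc ε m)
    · rw [sc_spec] at h2
      rw [if_pos hh]
      split_ifs at h2 ⊢ <;> simpa using h2
    · rw [eq_zero_XV hh (h (asrc ε m) _)] at h2
      rw [if_neg hh]
      split_ifs at h2 ⊢ <;> simpa using h2

theorem sum_R {K : Type} [Field K] (d : ℕ → K) (l : ℕ) :
    ∃ h : ℕ → K, h (l + 1) = 0 ∧ ∀ m, m ≤ l → h m = d m + h (m + 1) :=
  ⟨fun m => ∑ p ∈ Finset.Ico m (l + 1), d p, by simp, fun m hm =>
    Finset.sum_eq_sum_Ico_succ_bot (by omega) d⟩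

theorem sum_L {K : Type} [Field K] (d : ℕ → K) (k : ℕ) :
    ∃ h : ℕ → K, h k = 0 ∧ ∀ m, k ≤ m → h (m + 1) = h m + d m :=
  ⟨fun m => ∑ p ∈ Finset.Ico k m, d p, by simp, fun m hm =>
    Finset.sum_Ico_succ_top hm d⟩

theorem const_of {K : Type} (h : ℕ → K) (k l : ℕ) (hkl : k < l)
    (H : ∀ m, k < m → m < l → h (m + 1) = h m) : h l = h (k + 1) := by
  induction l, hkl using Nat.le_induction with
  | base => rfl
  | succ l hl ih =>
    rw [H l (by omega) (by omega)]
    exact ih fun m h1 h2 => H m h1 (by omega)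

/-- Lemma 3.10 (nested case), Ext part. -/
theorem ext_nested (K : Type) [Field K] (n : ℕ) (ε : ℕ → Bool) (i k l j : ℕ)
    (h1 : i < k) (h2 : k < l) (h3 : l < j) (h4 : j ≤ n) :
    (extNonzero (Xrep K n ε i j) (Xrep K n ε k l) ↔ ε k = true ∧ ε l = false) ∧
    (extNonzero (Xrep K n ε k l) (Xrep K n ε i j) ↔ ε k = false ∧ ε l = true) := by
  classical
  rw [ext_scalar, ext_scalar]
  refine ⟨⟨?_, ?_⟩, ⟨?_, ?_⟩⟩
  · rintro ⟨c, hc⟩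
    by_contra hcon
    have : ε k = false ∨ ε l = true := by
      cases hk : ε k <;> cases hl : ε l <;> simp_all
    rcases this with hk | hl
    · obtain ⟨h, h0, hR⟩ := sum_R (fun m => if ε m then - c m else c m) l
      obtain ⟨m, hs, ht, hm⟩ := hc h
      apply hm
      have hR' := hR m
      unfold Sup asrc atgt at *
      grind
    · obtain ⟨h, h0, hL⟩ := sum_L (fun m => if ε m then c m else - c m) k
      obtain ⟨m, hs, ht, hm⟩ := hc h
      apply hm
      have hL' := hL m
      unfold Sup asrc atgt at *
      grind
  · rintro ⟨hk, hl⟩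
    refine ⟨fun m => if m = k then 1 else 0, fun h => ?_⟩
    by_contra! hcon
    have h5 := const_of h k l h2 fun m hm1 hm2 => by
      have := hcon m
      unfold Sup asrc atgt at this
      grind
    have h6 := hcon k
    have h7 := hcon l
    unfold Sup asrc atgt at h6 h7
    grind
  · rintro ⟨c, hc⟩
    by_contra hcon
    have : ε k = true ∨ ε l = false := by
      cases hk : ε k <;> cases hl : ε l <;> simp_all
    rcases this with hk | hl
    · obtain ⟨h, h0, hR⟩ := sum_R (fun m => if ε m then - c m else c m) l
      obtain ⟨m, hs, ht, hm⟩ := hc h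
      apply hm
      have hR' := hR m
      unfold Sup asrc atgt at *
      grind
    · obtain ⟨h, h0, hL⟩ := sum_L (fun m => if ε m then c m else - c m) k
      obtain ⟨m, hs, ht, hm⟩ := hc h
      apply hm
      have hL' := hL m
      unfold Sup asrc atgt at *
      grind
  · rintro ⟨hk, hl⟩
    refine ⟨fun m => if m = k then 1 else 0, fun h => ?_⟩
    by_contra! hcon
    have h5 := const_of h k l h2 fun m hm1 hm2 => by
      have := hcon m
      unfold Sup asrc atgt at this
      grind
    have h6 := hcon k
    have h7 := hcon l
    unfold Sup asrc atgt at h6 h7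
    grind

end ESPaper
end

section
/- Assume 0 ≤ i < k < j ≤ n. Then Hom(X_{i,k}, X_{k,j}) = 0 and Hom(X_{k,j}, X_{i,k}) = 0; moreover Ext^1(X_{i,k}, X_{k,j}) ≠ 0 if and only if ε_k = +, and Ext^1(X_{k,j}, X_{i,k}) ≠ 0 if and only if ε_k = −. -/
namespace ESPaper

variable {K : Type} [Field K]

theorem ext_vanish {n : ℕ} {ε : ℕ → Bool} (A B : Rep K n ε)
    (h : ∀ m, Subsingleton (A.V (asrc ε m)) ∨ Subsingleton (B.V (atgt ε m))) :
    ¬ extNonzero A B := by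
  rintro ⟨E, f, g, ⟨_, hs, hr⟩, hn⟩
  apply hn
  have hex : ∀ m, ∃ s : A.V m →ₗ[K] E.V m, (g.app m).comp s = LinearMap.id := fun m =>
    LinearMap.exists_rightInverse_of_surjective (g.app m) (LinearMap.range_eq_top.2 (hs m))
  choose s hs' using hex
  have hs2 : ∀ m x, g.app m (s m x) = x := fun m x => LinearMap.congr_fun (hs' m) x
  refine ⟨⟨s, fun m => ?_⟩, hs'⟩
  ext x
  simp only [LinearMap.comp_apply]
  rcases h m with h | h
  · have : x = 0 := Subsingleton.elim _ _
    simp [this]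
  · have hinj : Function.Injective (g.app (atgt ε m)) := by
      rw [← LinearMap.ker_eq_bot, ← hr, LinearMap.range_eq_bot]
      ext y
      have : y = 0 := Subsingleton.elim _ _
      simp [this]
    apply hinj
    have hc := LinearMap.congr_fun (g.comm m) (s _ x)
    simp only [LinearMap.comp_apply] at hc
    rw [hs2, hc, hs2]

/-- Support predicate. -/
def Supp (n i j m : ℕ) : Prop := i + 1 ≤ m ∧ m ≤ j ∧ m ≤ n

instance (n i j m : ℕ) : Decidable (Supp n i j m) := by unfold Supp; infer_instance

theorem XV_zero {n i j m : ℕ} (h : ¬ Supp n i j m) (x : XV K n i j m) : x = 0 := by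
  obtain ⟨x, hx⟩ := x
  unfold XV at hx
  unfold Supp at h
  rw [if_neg h] at hx
  exact Subtype.ext (by simpa using hx)

theorem XV_mem {n i j m : ℕ} (h : Supp n i j m) (x : K) : x ∈ XV K n i j m := by
  unfold XV
  unfold Supp at h
  rw [if_pos h]
  trivial

theorem Xφ_val {n : ℕ} {ε : ℕ → Bool} {i j m : ℕ} (x : XV K n i j (asrc ε m)) :
    (Xφ K n ε i j m x : K) = if Supp n i j (atgt ε m) then (x : K) else 0 := by
  by_cases h : Supp n i j (atgt ε m)
  · rw [if_pos h]
    unfold Supp at h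
    unfold Xφ
    rw [dif_pos h]
    rfl
  · rw [if_neg h]
    unfold Supp at h
    unfold Xφ
    rw [dif_neg h]
    rfl

/-- Canonical map between interval spaces. -/
def TT (K : Type) [Field K] (n i j a b m : ℕ) : XV K n i j m →ₗ[K] XV K n a b m :=
  if h : Supp n a b m then
    LinearMap.codRestrict _ (XV K n i j m).subtype (fun x => XV_mem h _)
  else 0

theorem TT_val {n i j a b m : ℕ} (x : XV K n i j m) :
    (TT K n i j a b m x : K) = if Supp n a b m then (x : K) else 0 := by
  unfold TT
  split_ifs <;> simp

theorem TT_comm {n : ℕ} {ε : ℕ → Bool} {i j a b m : ℕ}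
    (h : Supp n i j (asrc ε m) → Supp n a b (atgt ε m) →
      (Supp n i j (atgt ε m) ↔ Supp n a b (asrc ε m))) (x : XV K n i j (asrc ε m)) :
    TT K n i j a b (atgt ε m) (Xφ K n ε i j m x)
      = Xφ K n ε a b m (TT K n i j a b (asrc ε m) x) := by
  apply Subtype.ext
  rw [TT_val, Xφ_val, Xφ_val, TT_val]
  by_cases h1 : Supp n i j (asrc ε m)
  · by_cases h2 : Supp n a b (atgt ε m)
    · simp only [h2, h h1 h2]
    · simp [h2]
  · simp [XV_zero h1 x]

/-- Canonical morphism. -/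
def TH (K : Type) [Field K] (n : ℕ) (ε : ℕ → Bool) (i j a b : ℕ)
    (h : ∀ m, Supp n i j (asrc ε m) → Supp n a b (atgt ε m) →
      (Supp n i j (atgt ε m) ↔ Supp n a b (asrc ε m))) :
    RepHom (Xrep K n ε i j) (Xrep K n ε a b) where
  app m := TT K n i j a b m
  comm m := LinearMap.ext fun x => TT_comm (h m) x

theorem ext_nonvanish {n : ℕ} {ε : ℕ → Bool} {a b c d i j : ℕ}
    (hE : ∀ m, Supp n i j m ↔ Supp n a b m ∨ Supp n c d m)
    (hd : ∀ m, Supp n a b m → Supp n c d m → False)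
    (ha : ∀ m, Supp n a b (atgt ε m) → Supp n c d (asrc ε m) → False)
    (q : ℕ) (hq1 : Supp n a b (asrc ε q)) (hq2 : Supp n c d (atgt ε q)) :
    extNonzero (Xrep K n ε a b) (Xrep K n ε c d) := by
  refine ⟨Xrep K n ε i j, TH K n ε c d i j ?_, TH K n ε i j a b ?_, ⟨?_, ?_, ?_⟩, ?_⟩
  · intro m h1 h2
    have := hE (atgt ε m)
    have := hE (asrc ε m)
    have := ha m
    tauto
  · intro m h1 h2
    have := hE (atgt ε m)
    have := hE (asrc ε m)
    have := ha m
    tauto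
  · intro m
    change Function.Injective (TT K n c d i j m)
    intro x y hxy
    by_cases h : Supp n c d m
    · have h' := congrArg Subtype.val hxy
      rw [TT_val, TT_val, if_pos ((hE m).2 (Or.inr h)), if_pos ((hE m).2 (Or.inr h))] at h'
      exact Subtype.ext h'
    · rw [XV_zero h x, XV_zero h y]
  · intro m
    change Function.Surjective (TT K n i j a b m)
    intro y
    by_cases h : Supp n a b m
    · refine ⟨⟨y, XV_mem ((hE m).2 (Or.inl h)) _⟩, Subtype.ext ?_⟩
      rw [TT_val, if_pos h]
    · exact ⟨0, by rw [XV_zero h y, map_zero]⟩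
  · intro m
    change LinearMap.range (TT K n c d i j m) = LinearMap.ker (TT K n i j a b m)
    ext x
    rw [LinearMap.mem_range, LinearMap.mem_ker]
    constructor
    · rintro ⟨y, rfl⟩
      by_cases h : Supp n c d m
      · exact XV_zero (fun h' => hd m h' h) _
      · rw [XV_zero h y, map_zero, map_zero]
    · intro hx
      by_cases h : Supp n c d m
      · refine ⟨⟨x, XV_mem h _⟩, Subtype.ext ?_⟩
        rw [TT_val, if_pos ((hE m).2 (Or.inr h))]
      · refine ⟨0, ?_⟩
        rw [map_zero]
        by_cases h2 : Supp n a b m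
        · have h' := congrArg Subtype.val hx
          rw [TT_val, if_pos h2] at h'
          exact Subtype.ext h'.symm
        · exact (XV_zero (fun h3 => ((hE m).1 h3).elim h2 h) x).symm
  · rintro ⟨s, hs⟩
    let one : XV K n a b (asrc ε q) := ⟨1, XV_mem hq1 _⟩
    let y : XV K n i j (asrc ε q) := s.app (asrc ε q) one
    have e1 : TT K n i j a b (asrc ε q) y = one := LinearMap.congr_fun (hs (asrc ε q)) one
    have e2 : s.app (atgt ε q) (Xφ K n ε a b q one) = Xφ K n ε i j q y :=
      LinearMap.congr_fun (s.comm q) one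
    have e3 : Xφ K n ε a b q one = 0 := XV_zero (fun h => hd _ h hq2) _
    have e4 : Xφ K n ε i j q y = 0 := by
      rw [← e2, e3]
      exact map_zero (s.app (atgt ε q))
    have e5 := congrArg Subtype.val e4
    have e6 := congrArg Subtype.val e1
    rw [Xφ_val, if_pos ((hE _).2 (Or.inr hq2))] at e5
    rw [TT_val, if_pos hq1] at e6
    have e7 : (1 : K) = 0 := e6.symm.trans e5
    exact one_ne_zero e7

theorem X_sub {n : ℕ} {ε : ℕ → Bool} {i j m : ℕ} (h : ¬ Supp n i j m) :
    Subsingleton ((Xrep K n ε i j).V m) :=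
  ⟨fun x y => (XV_zero h x).trans (XV_zero h y).symm⟩

theorem hom_vanish {n : ℕ} {ε : ℕ → Bool} {a b c d : ℕ}
    (hd : ∀ m, Supp n a b m → Supp n c d m → False) :
    homZero (Xrep K n ε a b) (Xrep K n ε c d) := by
  intro θ m
  refine LinearMap.ext fun x => ?_
  by_cases h : Supp n a b m
  · haveI := X_sub (K := K) (ε := ε) (fun h' => hd m h h')
    exact Subsingleton.elim _ _
  · haveI := X_sub (K := K) (ε := ε) h
    rw [Subsingleton.elim x 0, map_zero, map_zero]

/-- Lemma 3.11 i)–iii): representations sharing the middle endpoint `k`. -/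
theorem shared_middle_endpoint (K : Type) [Field K] (n : ℕ) (ε : ℕ → Bool) (i k j : ℕ)
    (h1 : i < k) (h2 : k < j) (h3 : j ≤ n) :
    homZero (Xrep K n ε i k) (Xrep K n ε k j) ∧
    homZero (Xrep K n ε k j) (Xrep K n ε i k) ∧
    (extNonzero (Xrep K n ε i k) (Xrep K n ε k j) ↔ ε k = true) ∧
    (extNonzero (Xrep K n ε k j) (Xrep K n ε i k) ↔ ε k = false) := by
  refine ⟨hom_vanish ?_, hom_vanish ?_, ⟨fun h => ?_, fun h => ?_⟩, ⟨fun h => ?_, fun h => ?_⟩⟩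
  · unfold Supp; omega
  · unfold Supp; omega
  · by_contra hk
    refine ext_vanish _ _ (fun m => ?_) h
    by_cases h' : Supp n i k (asrc ε m)
    · refine Or.inr (X_sub fun h'' => ?_)
      unfold Supp asrc at h'
      unfold Supp atgt at h''
      by_cases hm : m = k
      · subst hm
        simp only [hk] at h' h''
        simp at h' h''
      · split_ifs at h' h'' <;> omega
    · exact Or.inl (X_sub h')
  · refine ext_nonvanish (i := i) (j := j) ?_ ?_ ?_ k ?_ ?_
    · unfold Supp; omega
    · unfold Supp; omega
    · intro m h' h''
      unfold Supp asrc at h''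
      unfold Supp atgt at h'
      by_cases hm : m = k
      · subst hm
        simp only [h] at h' h''
        simp at h' h''
      · split_ifs at h' h'' <;> omega
    · simp only [Supp, asrc, h, if_true]; omega
    · simp only [Supp, atgt, h, if_true]; omega
  · by_contra hk
    refine ext_vanish _ _ (fun m => ?_) h
    by_cases h' : Supp n k j (asrc ε m)
    · refine Or.inr (X_sub fun h'' => ?_)
      unfold Supp asrc at h'
      unfold Supp atgt at h''
      by_cases hm : m = k
      · subst hm
        simp only [Bool.not_eq_false] at hk
        simp only [hk] at h' h''
        simp at h' h''
      · split_ifs at h' h'' <;> omega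
    · exact Or.inl (X_sub h')
  · refine ext_nonvanish (i := i) (j := j) ?_ ?_ ?_ k ?_ ?_
    · unfold Supp; omega
    · unfold Supp; omega
    · intro m h' h''
      unfold Supp asrc at h''
      unfold Supp atgt at h'
      by_cases hm : m = k
      · subst hm
        simp only [h] at h' h''
        simp at h' h''
      · split_ifs at h' h'' <;> omega
    · simp only [Supp, asrc, h]; simp; omega
    · simp only [Supp, atgt, h]; simp; omega

end ESPaper
end
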